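/- arXiv:1510.05179 — 3 statements merged into one kernel-verified Lean document; each statement's English description precedes it below -/
import Mathlib

section
/- Suppose (V, ⊕, ⊗) satisfies criteria (C1), (C2) and (C3). Then for every finite edge set K, all key sets K₁, K₂, all arrays E_out : K × K₁ → V and E_in : K × K₂ → V, and all x ∈ K₁, y ∈ K₂, the product entry ⊕_{k∈K} E_out(k,x) ⊗ E_in(k,y) is nonzero if and only if there exists k ∈ K with E_out(k,x) ≠ 0 and E_in(k,y) ≠ 0. (In graph terms: if E_out and E_in are the source and target incidence arrays of a weighted directed graph, then E_outᵀ E_in is an adjacency array of the graph.) -/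
/-- If (V, ⊕, ⊗) satisfies (C1) no nontrivial additive inverses,
(C2) the zero-product property, and (C3) zero annihilates, then for every finite
edge set `K`, key sets `K₁ K₂`, incidence arrays `Eout : K × K₁ → V` and
`Ein : K × K₂ → V`, and all `x ∈ K₁`, `y ∈ K₂`, the product entry
`⊕_{k∈K} Eout(k,x) ⊗ Ein(k,y)` is nonzero iff some `k` has
`Eout(k,x) ≠ 0` and `Ein(k,y) ≠ 0` (i.e. `Eoutᵀ Ein` is an adjacency array). -/
theorem stmt0 (V : Type*) [AddCommMonoid V]
    (mul : V → V → V) (one : V)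
    (hone : ∀ v : V, mul v one = v ∧ mul one v = v)
    (C1 : ∀ v w : V, v ≠ 0 → w ≠ 0 → v + w ≠ 0)
    (C2 : ∀ a b : V, a ≠ 0 → b ≠ 0 → mul a b ≠ 0)
    (C3 : ∀ v : V, mul v 0 = 0 ∧ mul 0 v = 0) :
    ∀ (K : Type) [Fintype K] (K₁ K₂ : Type)
      (Eout : K × K₁ → V) (Ein : K × K₂ → V) (x : K₁) (y : K₂),
      (∑ k : K, mul (Eout (k, x)) (Ein (k, y))) ≠ 0 ↔
        ∃ k : K, Eout (k, x) ≠ 0 ∧ Ein (k, y) ≠ 0 := by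
  intro K _ K₁ K₂ Eout Ein x y
  constructor
  · intro h
    obtain ⟨k, -, hk⟩ := Finset.exists_ne_zero_of_sum_ne_zero h
    refine ⟨k, fun h0 => hk ?_, fun h0 => hk ?_⟩
    · rw [h0]; exact (C3 _).2
    · rw [h0]; exact (C3 _).1
  · rintro ⟨k, h1, h2⟩
    classical
    rw [← Finset.add_sum_erase _ _ (Finset.mem_univ k)]
    have hk := C2 _ _ h1 h2
    by_cases hs : (∑ j ∈ Finset.univ.erase k, mul (Eout (j, x)) (Ein (j, y))) = 0
    · rw [hs, add_zero]; exact hk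
    · exact C1 _ _ hk hs
end

section
/- Suppose that for every finite edge set K, all key sets K₁, K₂, all arrays E_out : K × K₁ → V and E_in : K × K₂ → V, and all x ∈ K₁, y ∈ K₂, the entry ⊕_{k∈K} E_out(k,x) ⊗ E_in(k,y) is nonzero if and only if there exists k ∈ K with E_out(k,x) ≠ 0 and E_in(k,y) ≠ 0. Then (V, ⊕, ⊗) satisfies all three criteria: (C1) no nontrivial additive inverses (v ≠ 0 and w ≠ 0 imply v ⊕ w ≠ 0), (C2) the zero-product property (a ≠ 0 and b ≠ 0 imply a ⊗ b ≠ 0), and (C3) zero annihilates (v ⊗ 0 = 0 ⊗ v = 0 for all v ∈ V). -/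
/-- If, for every finite edge set `K`, key sets `K₁ K₂`, arrays
`Eout`, `Ein`, and keys `x`, `y`, the entry `⊕_{k∈K} Eout(k,x) ⊗ Ein(k,y)` is
nonzero iff some `k ∈ K` has `Eout(k,x) ≠ 0` and `Ein(k,y) ≠ 0`, then (V,⊕,⊗)
satisfies (C1) no nontrivial additive inverses, (C2) the zero-product property,
and (C3) zero annihilates. -/
theorem stmt6 (V : Type*) [AddCommMonoid V]
    (mul : V → V → V) (one : V)
    (hone : ∀ v : V, mul v one = v ∧ mul one v = v)
    (h : ∀ (K : Type) [Fintype K] (K₁ K₂ : Type)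
      (Eout : K × K₁ → V) (Ein : K × K₂ → V) (x : K₁) (y : K₂),
      (∑ k : K, mul (Eout (k, x)) (Ein (k, y))) ≠ 0 ↔
        ∃ k : K, Eout (k, x) ≠ 0 ∧ Ein (k, y) ≠ 0) :
    (∀ v w : V, v ≠ 0 → w ≠ 0 → v + w ≠ 0) ∧
    (∀ a b : V, a ≠ 0 → b ≠ 0 → mul a b ≠ 0) ∧
    (∀ v : V, mul v 0 = 0 ∧ mul 0 v = 0) := by
  have key : ∀ a b : V, mul a b ≠ 0 ↔ a ≠ 0 ∧ b ≠ 0 := by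
    intro a b
    have := h Unit Unit Unit (fun _ => a) (fun _ => b) () ()
    simpa using this
  refine ⟨?_, fun a b ha hb => (key a b).2 ⟨ha, hb⟩, fun v => ⟨?_, ?_⟩⟩
  · intro v w hv hw
    have h1 : one ≠ 0 := ((key v one).1 (by rw [(hone v).1]; exact hv)).2
    have h2 := (h Bool Unit Unit (fun p => if p.1 then v else w) (fun _ => one) () ()).2
      ⟨true, by simpa using hv, h1⟩
    simpa [(hone _).1] using h2
  · by_contra hc
    exact ((key _ _).1 hc).2 rfl
  · by_contra hc
    exact ((key _ _).1 hc).1 rfl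
end

section
/- Suppose (V, ⊕, ⊗) satisfies criteria (C1), (C2) and (C3). Then for every finite edge set K, all key sets K₁, K₂, all arrays E_out : K × K₁ → V and E_in : K × K₂ → V, and all y ∈ K₂, x ∈ K₁, the entry (E_inᵀ E_out)(y,x) = ⊕_{k∈K} E_in(k,y) ⊗ E_out(k,x) is nonzero if and only if there exists k ∈ K with E_in(k,y) ≠ 0 and E_out(k,x) ≠ 0. (In graph terms: if E_out and E_in are the source and target incidence arrays of a weighted directed graph G, then E_inᵀ E_out is an adjacency array of the reversed graph R(G), since E_in and E_out serve as source and target incidence arrays of R(G).) -/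
/-- If (V, ⊕, ⊗) satisfies (C1), (C2) and (C3), then for every
finite edge set `K`, key sets `K₁ K₂`, arrays `Eout : K × K₁ → V`,
`Ein : K × K₂ → V` and all `y ∈ K₂`, `x ∈ K₁`, the entry
`(Einᵀ Eout)(y,x) = ⊕_{k∈K} Ein(k,y) ⊗ Eout(k,x)` is nonzero iff some `k`
has `Ein(k,y) ≠ 0` and `Eout(k,x) ≠ 0` (i.e. `Einᵀ Eout` is an adjacency
array of the reversed graph). -/
theorem stmt7 (V : Type*) [AddCommMonoid V]
    (mul : V → V → V) (one : V)
    (hone : ∀ v : V, mul v one = v ∧ mul one v = v)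
    (C1 : ∀ v w : V, v ≠ 0 → w ≠ 0 → v + w ≠ 0)
    (C2 : ∀ a b : V, a ≠ 0 → b ≠ 0 → mul a b ≠ 0)
    (C3 : ∀ v : V, mul v 0 = 0 ∧ mul 0 v = 0) :
    ∀ (K : Type) [Fintype K] (K₁ K₂ : Type)
      (Eout : K × K₁ → V) (Ein : K × K₂ → V) (y : K₂) (x : K₁),
      (∑ k : K, mul (Ein (k, y)) (Eout (k, x))) ≠ 0 ↔
        ∃ k : K, Ein (k, y) ≠ 0 ∧ Eout (k, x) ≠ 0 := by
  intro K _ K₁ K₂ Eout Ein y x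
  classical
  constructor
  · intro h
    obtain ⟨k, -, hk⟩ := Finset.exists_ne_zero_of_sum_ne_zero h
    refine ⟨k, fun h0 => hk ?_, fun h0 => hk ?_⟩
    · rw [h0]; exact (C3 _).2
    · rw [h0]; exact (C3 _).1
  · rintro ⟨k, h1, h2⟩
    rw [← Finset.add_sum_erase Finset.univ _ (Finset.mem_univ k)]
    have hm := C2 _ _ h1 h2
    by_cases hs : ∑ j ∈ Finset.univ.erase k, mul (Ein (j, y)) (Eout (j, x)) = 0
    · rw [hs, add_zero]; exact hm
    · exact C1 _ _ hm hs
end
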